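/- arXiv:2307.05349 — 7 statements merged into one kernel-verified Lean document; each statement's English description precedes it below -/
import Mathlib

section
/- Let T > 0 and let K : (0, ∞) → ℝ be twice differentiable on (0, ∞) with K(t) ≥ 0, K′(t) ≤ 0 and K″(t) ≥ 0 for all t > 0, and suppose K is integrable on (0, T). Then for every continuous function v : [0, T] → ℝ and every t ∈ [0, T], the iterated integral ∫₀ᵗ v(s) (∫₀ˢ K(s − η) v(η) dη) ds is nonnegative. -/
/-!
Extend `v` by zero to an integrable `f` on `ℝ`. By symmetry, twice the Volterra form of `v` is the
double integral of `K |x - y| f(x) f(y)` over the plane, so it suffices to prove that the latter is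
nonnegative.

The kernel `1` gives `(∫ f)²`, and the triangle kernel `(a - |x - y|)₊` is the autocorrelation of an
indicator function, so it gives an integral of squares (`triangle_form_nonneg`). For `ε > 0`, Taylor's
formula with integral remainder at `t + ε` (`taylor_kernel`) writes `K (x + ε)`, `0 ≤ x ≤ t`, as a
combination of `1`, `(t - x)₊` and the `(a - x)₊`, with the nonnegative coefficients `K (t + ε)`,
`-K' (t + ε)` and `K'' (a + ε) da`. Hence the shifted kernel has a nonnegative form
(`shifted_form_nonneg`). As `ε → 0` the forms converge by domination by `K |x - y|`, because `K` is
nonincreasing.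
-/

open MeasureTheory Set

lemma const_form_nonneg (f : ℝ → ℝ) : 0 ≤ ∫ p : ℝ × ℝ, f p.1 * f p.2 := by
  rw [Measure.volume_eq_prod, integral_prod_mul]
  exact mul_self_nonneg _

/-- The triangle function is the autocorrelation of the indicator of `[0, a]`. -/
lemma integral_indicator_mul_indicator (a x y : ℝ) :
    ∫ u, (Icc 0 a).indicator (1 : ℝ → ℝ) (x - u) * (Icc 0 a).indicator (1 : ℝ → ℝ) (y - u)
      = max (a - |x - y|) 0 := by
  have h : (fun u => (Icc 0 a).indicator (1 : ℝ → ℝ) (x - u) *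
      (Icc 0 a).indicator (1 : ℝ → ℝ) (y - u)) =
      (Icc (max x y - a) (min x y)).indicator 1 := by
    funext u
    by_cases hx : x - u ∈ Icc 0 a <;> by_cases hy : y - u ∈ Icc 0 a <;>
      by_cases hu : u ∈ Icc (max x y - a) (min x y) <;>
      simp only [hx, hy, hu, indicator_of_mem, indicator_of_notMem, not_false_eq_true,
        Pi.one_apply, mul_one, mul_zero] <;> exfalso <;> grind
  rw [h, integral_indicator_one measurableSet_Icc, Real.volume_real_Icc]
  congr 1
  rcases le_total x y with h | h
  · rw [abs_of_nonpos (by linarith), max_eq_right h, min_eq_left h]; ring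
  · rw [abs_of_nonneg (by linarith), max_eq_left h, min_eq_right h]; ring

lemma integrable_mul_self_prod {f : ℝ → ℝ} (hf : Integrable f) :
    Integrable (fun p : ℝ × ℝ => f p.1 * f p.2) := hf.mul_prod hf

/-- By Fubini the form is `∫ u, (∫ x in u..u+a, f x) ^ 2`; for `a < 0` the kernel vanishes. -/
lemma triangle_form_nonneg (f : ℝ → ℝ) (hf : Integrable f) (a : ℝ) :
    0 ≤ ∫ p : ℝ × ℝ, max (a - |p.1 - p.2|) 0 * (f p.1 * f p.2) := by
  set ψ : ℝ → ℝ := (Icc 0 a).indicator 1 with hψ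
  have hψm : Measurable ψ := measurable_one.indicator measurableSet_Icc
  have hψ0 : ∀ x, 0 ≤ ψ x := fun x => indicator_nonneg (by simp) x
  have hff := integrable_mul_self_prod hf
  have hψi : ∀ x y, Integrable (fun u => ψ (x - u) * ψ (y - u)) := by
    intro x y
    have h1 : Integrable ψ :=
      (integrable_indicator_iff measurableSet_Icc).2
        (integrableOn_const (C := (1 : ℝ)) isCompact_Icc.measure_lt_top.ne)
    refine (h1.comp_sub_left x).mul_bdd (c := 1)
      (hψm.comp (measurable_const.sub measurable_id)).aestronglyMeasurable ?_
    refine Filter.Eventually.of_forall fun u => ?_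
    rw [Real.norm_of_nonneg (hψ0 _)]
    exact indicator_le_self' (by simp) _ |>.trans (by simp)
  have hF : Integrable (fun q : ℝ × (ℝ × ℝ) =>
      (ψ (q.2.1 - q.1) * ψ (q.2.2 - q.1)) * (f q.2.1 * f q.2.2)) := by
    have hm : AEStronglyMeasurable (fun q : ℝ × (ℝ × ℝ) =>
      (ψ (q.2.1 - q.1) * ψ (q.2.2 - q.1)) * (f q.2.1 * f q.2.2)) := by
      refine AEStronglyMeasurable.mul ?_ ?_
      · exact (by fun_prop : Measurable fun q : ℝ × (ℝ × ℝ) =>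
          ψ (q.2.1 - q.1) * ψ (q.2.2 - q.1)).aestronglyMeasurable
      · exact hff.aestronglyMeasurable.comp_snd
    rw [Measure.volume_eq_prod] at hm ⊢
    rw [integrable_prod_iff' hm]
    refine ⟨Filter.Eventually.of_forall fun p =>
      (hψi p.1 p.2).mul_const (f p.1 * f p.2), ?_⟩
    simp only [norm_mul, Real.norm_of_nonneg (hψ0 _), integral_mul_const]
    simp only [hψ, integral_indicator_mul_indicator]
    refine (hff.norm.bdd_mul (c := |a|) ?_ ?_).congr
      (f := fun p : ℝ × ℝ => max (a - |p.1 - p.2|) 0 * ‖f p.1 * f p.2‖) ?_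
    · exact (by fun_prop : Continuous fun p : ℝ × ℝ =>
        max (a - |p.1 - p.2|) 0).aestronglyMeasurable
    · refine Filter.Eventually.of_forall fun p => ?_
      rw [Real.norm_of_nonneg (le_max_right _ _)]
      exact max_le (by linarith [le_abs_self a, abs_nonneg (p.1 - p.2)]) (abs_nonneg a)
    · exact Filter.Eventually.of_forall fun p => by simp
  have key : ∫ p : ℝ × ℝ, max (a - |p.1 - p.2|) 0 * (f p.1 * f p.2)
      = ∫ u, ∫ p : ℝ × ℝ, (ψ (p.1 - u) * ψ (p.2 - u)) * (f p.1 * f p.2) := by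
    rw [integral_integral_swap hF]
    simp only [integral_mul_const]
    simp only [hψ, integral_indicator_mul_indicator]
  rw [key]
  refine integral_nonneg fun u => ?_
  refine (const_form_nonneg fun x => ψ (x - u) * f x).trans_eq ?_
  refine integral_congr_ae (Filter.Eventually.of_forall fun p => ?_)
  simp only
  ring

/-- Taylor's formula at `t + ε` with integral remainder. The positive parts restrict the remainder
to `a ≥ x`, so that the domain of integration does not depend on `x`. -/
lemma taylor_kernel (K K' K'' : ℝ → ℝ)
    (hK1 : ∀ t > (0:ℝ), HasDerivAt K (K' t) t)
    (hK2 : ∀ t > (0:ℝ), HasDerivAt K' (K'' t) t)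
    {ε t x : ℝ} (hε : 0 < ε) (hx : 0 ≤ x) (hxt : x ≤ t)
    (hi : IntegrableOn (fun a => K'' (a + ε)) (Ioc 0 t)) :
    K (x + ε) = K (t + ε) + -K' (t + ε) * max (t - x) 0 +
      ∫ a in Ioc 0 t, K'' (a + ε) * max (a - x) 0 := by
  have h1 : ∫ a in Ioc 0 t, K'' (a + ε) * max (a - x) 0 =
      ∫ a in x..t, K'' (a + ε) * (a - x) := by
    rw [intervalIntegral.integral_of_le hxt,
      ← integral_indicator measurableSet_Ioc, ← integral_indicator measurableSet_Ioc]
    congr 1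
    funext a
    simp only [indicator, mem_Ioc]
    split_ifs with h h' h'
    · rw [max_eq_left (by linarith)]
    · rw [max_eq_right (by grind), mul_zero]
    · grind
    · rfl
  have h2 : ∫ a in x..t, K'' (a + ε) * (a - x) =
      (K' (t + ε) * (t - x) - K (t + ε)) - (K' (x + ε) * (x - x) - K (x + ε)) := by
    refine intervalIntegral.integral_eq_sub_of_hasDerivAt
      (f := fun a => K' (a + ε) * (a - x) - K (a + ε)) ?_ ?_
    · intro a ha
      rw [uIcc_of_le hxt] at ha
      have ha0 : 0 < a + ε := by linarith [ha.1]
      have d1 := (hK2 _ ha0).comp_add_const a ε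
      have d2 := (hK1 _ ha0).comp_add_const a ε
      refine ((d1.fun_mul ((hasDerivAt_id' a).sub_const x)).fun_sub d2).congr_deriv ?_
      ring
    · refine IntervalIntegrable.mul_continuousOn ?_ (by fun_prop)
      rw [intervalIntegrable_iff_integrableOn_Ioc_of_le hxt]
      exact hi.mono_set (Ioc_subset_Ioc_left hx)
  rw [h1, h2, max_eq_left (by linarith)]
  ring

/-- Positivity for the kernel `K (|x - y| + ε)`, which is bounded near the diagonal. -/
lemma shifted_form_nonneg (K K' K'' : ℝ → ℝ)
    (hK1 : ∀ t > (0:ℝ), HasDerivAt K (K' t) t)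
    (hK2 : ∀ t > (0:ℝ), HasDerivAt K' (K'' t) t)
    (hKpos : ∀ t > (0:ℝ), 0 ≤ K t)
    (hK'neg : ∀ t > (0:ℝ), K' t ≤ 0)
    (hK''pos : ∀ t > (0:ℝ), 0 ≤ K'' t)
    (f : ℝ → ℝ) (hf : Integrable f) {t ε : ℝ} (ht : 0 ≤ t) (hε : 0 < ε)
    (hsupp : ∀ x, x ∉ Ioc 0 t → f x = 0) :
    0 ≤ ∫ p : ℝ × ℝ, K (|p.1 - p.2| + ε) * (f p.1 * f p.2) := by
  have hff := integrable_mul_self_prod hf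
  -- A nonnegative derivative is integrable, even if it is not continuous.
  have hi : IntegrableOn (fun a => K'' (a + ε)) (Ioc 0 t) := by
    refine intervalIntegral.integrableOn_deriv_of_nonneg (g := fun a => K' (a + ε)) ?_ ?_ ?_
    · intro a ha
      exact ((hK2 (a + ε) (by linarith [ha.1])).comp_add_const a ε).continuousAt.continuousWithinAt
    · intro a ha
      exact (hK2 (a + ε) (by linarith [ha.1])).comp_add_const a ε
    · intro a ha
      exact hK''pos _ (by linarith [ha.1])
  have htri : ∀ b, Integrable (fun p : ℝ × ℝ => max (b - |p.1 - p.2|) 0 * (f p.1 * f p.2)) := by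
    intro b
    refine hff.bdd_mul (c := |b|) (by fun_prop : Continuous fun p : ℝ × ℝ =>
        max (b - |p.1 - p.2|) 0).aestronglyMeasurable ?_
    refine Filter.Eventually.of_forall fun p => ?_
    rw [Real.norm_of_nonneg (le_max_right _ _)]
    exact max_le (by linarith [le_abs_self b, abs_nonneg (p.1 - p.2)]) (abs_nonneg b)
  -- Integrability for Fubini: the triangle kernel of parameter `a` is at most `|a|`.
  have hF : Integrable (fun q : ℝ × (ℝ × ℝ) =>
      K'' (q.1 + ε) * (max (q.1 - |q.2.1 - q.2.2|) 0 * (f q.2.1 * f q.2.2)))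
      ((volume.restrict (Ioc 0 t)).prod volume) := by
    have hia : Integrable (fun a => K'' (a + ε) * a) (volume.restrict (Ioc 0 t)) := by
      refine hi.mul_bdd (c := t) (by fun_prop) ?_
      refine (ae_restrict_mem measurableSet_Ioc).mono fun a ha => ?_
      rw [Real.norm_of_nonneg ha.1.le]
      exact ha.2
    refine (hia.mul_prod hff).mono ?_ ?_
    · refine AEStronglyMeasurable.mul hi.aestronglyMeasurable.comp_fst ?_
      refine AEStronglyMeasurable.mul ?_ hff.aestronglyMeasurable.comp_snd
      exact (by fun_prop : Continuous fun q : ℝ × (ℝ × ℝ) =>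
        max (q.1 - |q.2.1 - q.2.2|) 0).aestronglyMeasurable
    · refine Filter.Eventually.of_forall fun q => ?_
      rw [norm_mul, norm_mul (max _ _), norm_mul (_ * _), norm_mul (K'' _), mul_assoc]
      gcongr
      rw [Real.norm_of_nonneg (le_max_right _ _)]
      exact max_le (by linarith [le_abs_self q.1, abs_nonneg (q.2.1 - q.2.2), Real.norm_eq_abs q.1])
        (norm_nonneg _)
  have hI : Integrable (fun p : ℝ × ℝ => ∫ a in Ioc 0 t,
      K'' (a + ε) * (max (a - |p.1 - p.2|) 0 * (f p.1 * f p.2))) := hF.integral_prod_right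
  have key : ∀ p : ℝ × ℝ, K (|p.1 - p.2| + ε) * (f p.1 * f p.2) =
      K (t + ε) * (f p.1 * f p.2) +
      -K' (t + ε) * (max (t - |p.1 - p.2|) 0 * (f p.1 * f p.2)) +
      ∫ a in Ioc 0 t, K'' (a + ε) * (max (a - |p.1 - p.2|) 0 * (f p.1 * f p.2)) := by
    intro p
    simp only [← mul_assoc, integral_mul_const]
    by_cases h1 : p.1 ∈ Ioc 0 t
    · by_cases h2 : p.2 ∈ Ioc 0 t
      · rw [taylor_kernel K K' K'' hK1 hK2 hε (abs_nonneg _)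
          (abs_le.2 ⟨by linarith [h1.1, h2.2], by linarith [h1.2, h2.1]⟩) hi]
        ring
      · simp [hsupp _ h2]
    · simp [hsupp _ h1]
  simp only [key]
  rw [integral_add ((hff.const_mul _).fun_add ((htri t).const_mul _)) hI,
    integral_add (hff.const_mul _) ((htri t).const_mul _), integral_const_mul, integral_const_mul,
    ← integral_integral_swap hF]
  have p1 := mul_nonneg (hKpos (t + ε) (by linarith)) (const_form_nonneg f)
  have p2 := mul_nonneg (neg_nonneg.2 (hK'neg (t + ε) (by linarith))) (triangle_form_nonneg f hf t)
  have p3 : 0 ≤ ∫ a in Ioc 0 t, ∫ p : ℝ × ℝ,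
      K'' (a + ε) * (max (a - |p.1 - p.2|) 0 * (f p.1 * f p.2)) := by
    refine setIntegral_nonneg measurableSet_Ioc fun a ha => ?_
    rw [integral_const_mul]
    exact mul_nonneg (hK''pos _ (by linarith [ha.1])) (triangle_form_nonneg f hf a)
  linarith

lemma ae_fst_ne_snd : ∀ᵐ p : ℝ × ℝ, p.1 ≠ p.2 := by
  have : (volume : Measure (ℝ × ℝ)) (diagonal ℝ) = 0 := by
    rw [Measure.volume_eq_prod, Measure.measure_prod_null measurableSet_diagonal]
    refine Filter.Eventually.of_forall fun x => ?_
    have : Prod.mk x ⁻¹' diagonal ℝ = {x} := by ext y; simp [eq_comm]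
    simp [this]
  rw [ae_iff]
  convert this using 2
  ext p
  simp

/-- Positivity of the Volterra quadratic form with a nonnegative,
nonincreasing, convex kernel. -/
theorem stmt_0 (T : ℝ) (hT : 0 < T) (K K' K'' : ℝ → ℝ)
    (hK1 : ∀ t > (0:ℝ), HasDerivAt K (K' t) t)
    (hK2 : ∀ t > (0:ℝ), HasDerivAt K' (K'' t) t)
    (hKpos : ∀ t > (0:ℝ), 0 ≤ K t)
    (hK'neg : ∀ t > (0:ℝ), K' t ≤ 0)
    (hK''pos : ∀ t > (0:ℝ), 0 ≤ K'' t)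
    (hKint : IntegrableOn K (Ioo 0 T))
    (v : ℝ → ℝ) (hv : ContinuousOn v (Icc 0 T))
    (t : ℝ) (ht : t ∈ Icc (0:ℝ) T) :
    0 ≤ ∫ s in (0:ℝ)..t, v s * ∫ η in (0:ℝ)..s, K (s - η) * v η := by
  set f : ℝ → ℝ := (Ioc 0 t).indicator v with hfdef
  have hvt : ContinuousOn v (Icc 0 t) := hv.mono (Icc_subset_Icc_right ht.2)
  have hf : Integrable f := (integrable_indicator_iff measurableSet_Ioc).2
    (hvt.integrableOn_Icc.mono_set Ioc_subset_Icc_self)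
  have hsupp : ∀ x, x ∉ Ioc 0 t → f x = 0 := fun x hx => indicator_of_notMem hx v
  obtain ⟨C, hC⟩ : ∃ C, ∀ x, ‖f x‖ ≤ C := by
    obtain ⟨C, hC⟩ := isCompact_Icc.exists_bound_of_continuousOn hvt
    refine ⟨max C 0, fun x => ?_⟩
    by_cases hx : x ∈ Ioc 0 t
    · rw [hfdef, indicator_of_mem hx]
      exact (hC x (Ioc_subset_Icc_self hx)).trans (le_max_left _ _)
    · simp [hsupp x hx]
  set g : ℝ → ℝ := (Ioo 0 T).indicator K with hgdef
  have hg : Integrable g := (integrable_indicator_iff measurableSet_Ioo).2 hKint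
  have hH : Integrable (fun p : ℝ × ℝ => f p.1 * (g (p.1 - p.2) * f p.2)) := by
    have h := hf.convolution_integrand (ContinuousLinearMap.mul ℝ ℝ) hg
    have h' := Integrable.bdd_mul (c := C) h hf.aestronglyMeasurable.comp_fst
      (Filter.Eventually.of_forall fun p => hC p.1)
    refine h'.congr (Filter.Eventually.of_forall fun p => ?_)
    simp [mul_comm]
  -- The diagonal is excluded because `K 0` is arbitrary while `g 0 = 0`.
  have hS : (fun p : ℝ × ℝ => f p.1 * (g (p.1 - p.2) * f p.2) + f p.2 * (g (p.2 - p.1) * f p.1))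
      =ᵐ[volume] fun p => K |p.1 - p.2| * (f p.1 * f p.2) := by
    filter_upwards [ae_fst_ne_snd] with p hp
    by_cases h1 : p.1 ∈ Ioc 0 t
    · by_cases h2 : p.2 ∈ Ioc 0 t
      · obtain ⟨h1a, h1b⟩ := h1
        obtain ⟨h2a, h2b⟩ := h2
        have hT' := ht.2
        rcases lt_or_gt_of_ne hp with h | h
        · have e1 : g (p.1 - p.2) = 0 := indicator_of_notMem (by grind) K
          have e2 : g (p.2 - p.1) = K (p.2 - p.1) := indicator_of_mem (by grind) K
          rw [e1, e2, abs_of_neg (by linarith), neg_sub]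
          ring
        · have e1 : g (p.2 - p.1) = 0 := indicator_of_notMem (by grind) K
          have e2 : g (p.1 - p.2) = K (p.1 - p.2) := indicator_of_mem (by grind) K
          rw [e1, e2, abs_of_pos (by linarith)]
          ring
      · simp [hsupp _ h2]
    · simp [hsupp _ h1]
  have hSint := (hH.add hH.swap).congr hS
  have hanti : AntitoneOn K (Ioi 0) := by
    refine antitoneOn_of_deriv_nonpos (convex_Ioi 0)
      (fun x hx => (hK1 x hx).continuousAt.continuousWithinAt) ?_ ?_
    · rw [interior_Ioi]
      exact fun x hx => (hK1 x hx).differentiableAt.differentiableWithinAt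
    · rw [interior_Ioi]
      intro x hx
      rw [(hK1 x hx).deriv]
      exact hK'neg x hx
  have hlim : Filter.Tendsto (fun n : ℕ => ∫ p : ℝ × ℝ,
      K (|p.1 - p.2| + 1 / ((n : ℝ) + 1)) * (f p.1 * f p.2)) Filter.atTop
      (nhds (∫ p : ℝ × ℝ, K |p.1 - p.2| * (f p.1 * f p.2))) := by
    refine tendsto_integral_of_dominated_convergence
      (fun p : ℝ × ℝ => ‖K |p.1 - p.2| * (f p.1 * f p.2)‖) ?_ hSint.norm ?_ ?_
    · intro n
      refine AEStronglyMeasurable.mul (Continuous.aestronglyMeasurable ?_)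
        (integrable_mul_self_prod hf).aestronglyMeasurable
      refine continuous_iff_continuousAt.2 fun p => ?_
      exact ContinuousAt.comp (g := K) (hK1 _ (by positivity)).continuousAt
        (by fun_prop : Continuous fun p : ℝ × ℝ => |p.1 - p.2| + 1 / ((n : ℝ) + 1)).continuousAt
    · intro n
      filter_upwards [ae_fst_ne_snd] with p hp
      have hpos : 0 < |p.1 - p.2| := abs_pos.2 (sub_ne_zero.2 hp)
      have hn : (0:ℝ) < 1 / ((n : ℝ) + 1) := by positivity
      rw [norm_mul, norm_mul (K |p.1 - p.2|)]
      gcongr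
      rw [Real.norm_of_nonneg (hKpos _ hpos), Real.norm_of_nonneg (hKpos _ (by positivity))]
      exact hanti hpos (by simp only [mem_Ioi]; positivity) (by linarith)
    · filter_upwards [ae_fst_ne_snd] with p hp
      have hpos : 0 < |p.1 - p.2| := abs_pos.2 (sub_ne_zero.2 hp)
      refine Filter.Tendsto.mul_const _ ?_
      refine (hK1 _ hpos).continuousAt.tendsto.comp ?_
      simpa using (tendsto_one_div_add_atTop_nhds_zero_nat (𝕜 := ℝ)).const_add |p.1 - p.2|
  have hnonneg : 0 ≤ ∫ p : ℝ × ℝ, K |p.1 - p.2| * (f p.1 * f p.2) :=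
    ge_of_tendsto' hlim fun n => shifted_form_nonneg K K' K'' hK1 hK2 hKpos hK'neg hK''pos f hf
      ht.1 (by positivity) hsupp
  have hsym : ∫ p : ℝ × ℝ, K |p.1 - p.2| * (f p.1 * f p.2) =
      2 * ∫ p : ℝ × ℝ, f p.1 * (g (p.1 - p.2) * f p.2) := by
    rw [← integral_congr_ae hS]
    refine (integral_add hH hH.swap).trans ?_
    rw [two_mul]
    congr 1
    exact integral_prod_swap (fun p : ℝ × ℝ => f p.1 * (g (p.1 - p.2) * f p.2))
  have hiter : ∫ p : ℝ × ℝ, f p.1 * (g (p.1 - p.2) * f p.2) =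
      ∫ s in (0:ℝ)..t, v s * ∫ η in (0:ℝ)..s, K (s - η) * v η := by
    rw [Measure.volume_eq_prod, integral_prod _ hH, intervalIntegral.integral_of_le ht.1,
      ← integral_indicator measurableSet_Ioc]
    refine integral_congr_ae (Filter.Eventually.of_forall fun s => ?_)
    simp only [integral_const_mul]
    by_cases hs : s ∈ Ioc 0 t
    · rw [indicator_of_mem hs, hfdef, indicator_of_mem hs, intervalIntegral.integral_of_le hs.1.le,
        integral_Ioc_eq_integral_Ioo, ← integral_indicator measurableSet_Ioo]
      congr 2
      funext η
      obtain ⟨hsa, hsb⟩ := hs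
      have hT' := ht.2
      simp only [hgdef, indicator, mem_Ioo, mem_Ioc]
      split_ifs <;> first | rfl | (simp; done) | (exfalso; grind)
    · rw [indicator_of_notMem hs, hsupp s hs, zero_mul]
  rw [← hiter]
  linarith
end

section
/- Let T > 0 and 0 < ν < 1. If u : [0, T] → ℝ is differentiable with derivative u′ integrable on [0, T], then for every t ∈ (0, T]: u(t) · ∂₀ₜ^ν u(t) ≥ (1/2) ∂₀ₜ^ν (u²)(t), i.e. u(t) ∫₀ᵗ ω_{1−ν}(t − s) u′(s) ds ≥ (1/2) ∫₀ᵗ ω_{1−ν}(t − s) (u²)′(s) ds. -/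
/-!
Write `k(s) = om (1 - ν) (t - s)`, which is nonnegative and nondecreasing in `s < t`. Since
`(u(t) - u) u' = -(1/2) ((u(t) - u)²)'`, the claim says that `∫₀ᵗ k ((u(t) - u)²)' ≤ 0`.
Put `F = k (u(t) - u)²`. As `k' ≥ 0`, the integrand is at most `F'`, so the integral is at most
`F(t) - F(0) = -F(0) ≤ 0`; here `F` is continuous up to `t` with `F(t) = 0`, because differentiability
of `u` at `t` gives `F(s) = O((t - s)^(2 - ν))` (`continuousWithinAt_boundary`).

The integrability of `u'` does not make `k u'` integrable, and a divergent integral in the statement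
has the value `0`. If `k u'` is integrable, so is `k u u'`, and the argument applies.
If neither is integrable, the claim is `0 ≤ 0`. If only `k u u'` is integrable, then `u(t) = 0`
(otherwise one could divide by `u` near `t`, see `intervalIntegrable_of_mul`), and the
same argument shows that the left side is nonpositive.
-/

open MeasureTheory Set

/-- The kernel `ω_ν(t) = t^{ν-1} / Γ(ν)`. -/
noncomputable def om (ν t : ℝ) : ℝ := t ^ (ν - 1) / Real.Gamma ν

lemma om_nonneg {ν x : ℝ} (hν1 : ν < 1) (hx : 0 ≤ x) : 0 ≤ om (1 - ν) x :=
  div_nonneg (Real.rpow_nonneg hx _) (Real.Gamma_pos_of_pos (by linarith)).le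

lemma hasDerivAt_om {ν t s : ℝ} (hs : s < t) :
    HasDerivAt (fun s => om (1 - ν) (t - s))
      (ν * (t - s) ^ (-ν - 1) / Real.Gamma (1 - ν)) s := by
  have h1 : HasDerivAt (fun s : ℝ => t - s) (-1) s := by
    simpa using (hasDerivAt_id s).const_sub t
  have h2 := (h1.rpow_const (p := 1 - ν - 1) (Or.inl (by linarith))).div_const
    (Real.Gamma (1 - ν))
  refine h2.congr_deriv ?_
  rw [show (1 - ν - 1 - 1 : ℝ) = -ν - 1 by ring]
  ring

/-- The boundary term `om (1 - ν) (t - s) * (u t - u s) ^ 2` is continuous from the left at `s = t`,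
where its value is `0`. -/
lemma continuousWithinAt_boundary {ν t d : ℝ} {u : ℝ → ℝ} (hν1 : ν < 1)
    (hu : HasDerivAt u d t) :
    ContinuousWithinAt (fun s => om (1 - ν) (t - s) * (u t - u s) ^ 2) (Iic t) t := by
  obtain ⟨c, hc⟩ := hu.differentiableAt.isBigO_sub.bound
  have hG : 0 < Real.Gamma (1 - ν) := Real.Gamma_pos_of_pos (by linarith)
  have hlim : Filter.Tendsto (fun s => c ^ 2 / Real.Gamma (1 - ν) * (t - s) ^ (2 - ν))
      (nhdsWithin t (Iic t)) (nhds 0) := by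
    have h : Continuous (fun s => c ^ 2 / Real.Gamma (1 - ν) * (t - s) ^ (2 - ν)) := by
      refine continuous_const.mul ?_
      exact (continuous_const.sub continuous_id).rpow_const (fun _ => Or.inr (by linarith))
    have h0 := h.tendsto t
    rw [sub_self, Real.zero_rpow (by linarith), mul_zero] at h0
    exact h0.mono_left nhdsWithin_le_nhds
  unfold ContinuousWithinAt
  simp only [sub_self, ne_eq, OfNat.ofNat_ne_zero, not_false_eq_true, zero_pow, mul_zero]
  refine squeeze_zero' ?_ ?_ hlim
  · filter_upwards [self_mem_nhdsWithin] with s hs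
    have hs : s ≤ t := hs
    exact mul_nonneg (om_nonneg hν1 (by linarith)) (sq_nonneg _)
  · filter_upwards [self_mem_nhdsWithin, nhdsWithin_le_nhds hc] with s hs hcs
    have hs : s ≤ t := hs
    rcases hs.eq_or_lt with rfl | hlt
    · simp [Real.zero_rpow (show 2 - ν ≠ 0 by linarith)]
    have hpos : 0 < t - s := by linarith
    have hsq : (u t - u s) ^ 2 ≤ c ^ 2 * (t - s) ^ 2 := by
      rw [Real.norm_eq_abs, Real.norm_eq_abs] at hcs
      have := pow_le_pow_left₀ (abs_nonneg _) hcs 2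
      rw [mul_pow, sq_abs, sq_abs] at this
      nlinarith
    calc om (1 - ν) (t - s) * (u t - u s) ^ 2
        ≤ om (1 - ν) (t - s) * (c ^ 2 * (t - s) ^ 2) :=
          mul_le_mul_of_nonneg_left hsq (om_nonneg hν1 hpos.le)
      _ = c ^ 2 / Real.Gamma (1 - ν) * (t - s) ^ (2 - ν) := by
          have : (t - s) ^ (2 - ν) = (t - s) ^ (1 - ν - 1) * (t - s) ^ 2 := by
            rw [← Real.rpow_natCast, ← Real.rpow_add hpos]
            congr 1
            push_cast
            ring
          rw [this, om]
          ring

/-- The inequality `∫₀ᵗ k (u(t) - u) u' ≥ 0`, in the form `∫₀ᵗ k ((u(t) - u)²)' ≤ 0`, assuming only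
that this integrand is integrable. -/
lemma integral_kernel_nonpos {ν t : ℝ} {u u' : ℝ → ℝ} (hν0 : 0 < ν) (hν1 : ν < 1) (ht : 0 < t)
    (hu : ∀ s ∈ Icc (0:ℝ) t, HasDerivAt u (u' s) s)
    (hint : IntervalIntegrable
      (fun s => om (1 - ν) (t - s) * (2 * (u t - u s) * (-u' s))) volume 0 t) :
    ∫ s in (0:ℝ)..t, om (1 - ν) (t - s) * (2 * (u t - u s) * (-u' s)) ≤ 0 := by
  have hG : 0 < Real.Gamma (1 - ν) := Real.Gamma_pos_of_pos (by linarith)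
  have hder : ∀ s ∈ Ico (0:ℝ) t,
      HasDerivAt (fun s => om (1 - ν) (t - s) * (u t - u s) ^ 2)
        (ν * (t - s) ^ (-ν - 1) / Real.Gamma (1 - ν) * (u t - u s) ^ 2
          + om (1 - ν) (t - s) * (2 * (u t - u s) * (-u' s))) s := by
    intro s hs
    have h := (hasDerivAt_om (ν := ν) hs.2).mul (((hu s ⟨hs.1, hs.2.le⟩).const_sub (u t)).pow 2)
    refine h.congr_deriv ?_
    simp
  have hcont : ContinuousOn (fun s => om (1 - ν) (t - s) * (u t - u s) ^ 2) (Icc 0 t) := by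
    intro s hs
    rcases hs.2.eq_or_lt with h | h
    · rw [h]
      exact (continuousWithinAt_boundary hν1 (hu t ⟨ht.le, le_rfl⟩)).mono (fun x hx => hx.2)
    · exact (hder s ⟨hs.1, h⟩).continuousAt.continuousWithinAt
  have key := intervalIntegral.integral_le_sub_of_hasDeriv_right_of_le ht.le hcont
    (fun s hs => (hder s ⟨hs.1.le, hs.2⟩).hasDerivWithinAt)
    ((intervalIntegrable_iff_integrableOn_Icc_of_le ht.le).1 hint)
    (fun s hs => by
      have h1 : 0 ≤ (t - s) ^ (-ν - 1) := Real.rpow_nonneg (by linarith [hs.2]) _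
      have : 0 ≤ ν * (t - s) ^ (-ν - 1) / Real.Gamma (1 - ν) * (u t - u s) ^ 2 := by positivity
      linarith)
  have h0 : 0 ≤ om (1 - ν) (t - 0) * (u t - u 0) ^ 2 :=
    mul_nonneg (om_nonneg hν1 (by linarith)) (sq_nonneg _)
  have ht0 : om (1 - ν) (t - t) * (u t - u t) ^ 2 = 0 := by simp
  linarith

/-- If `u(t) ≠ 0`, integrability of `k u' u` on `[0, t]` implies that of `k u'`: the kernel is bounded
away from `t`, and `1 / u` is bounded near `t`. -/
lemma intervalIntegrable_of_mul {ν t : ℝ} {u u' : ℝ → ℝ} (ht : 0 < t)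
    (hu : ContinuousOn u (Icc 0 t)) (hu' : IntervalIntegrable u' volume 0 t) (hut : u t ≠ 0)
    (hint : IntervalIntegrable (fun s => om (1 - ν) (t - s) * u' s * u s) volume 0 t) :
    IntervalIntegrable (fun s => om (1 - ν) (t - s) * u' s) volume 0 t := by
  have hev : ∀ᶠ s in nhdsWithin t (Iic t), u s ≠ 0 := by
    have := (hu t ⟨ht.le, le_rfl⟩).eventually_ne hut
    rwa [nhdsWithin_Icc_eq_nhdsLE ht] at this
  obtain ⟨b, hb, hbu⟩ := mem_nhdsLE_iff_exists_Icc_subset.1 hev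
  set a := max b 0 with ha
  have hat : a < t := max_lt hb ht
  have ha0 : 0 ≤ a := le_max_right _ _
  have hab : b ≤ a := le_max_left _ _
  have hA : IntervalIntegrable (fun s => om (1 - ν) (t - s) * u' s) volume 0 a := by
    refine IntervalIntegrable.continuousOn_mul (hu'.mono_set ?_) ?_
    · rw [uIcc_of_le ha0, uIcc_of_le ht.le]
      exact Icc_subset_Icc_right hat.le
    · rw [uIcc_of_le ha0]
      exact fun s hs =>
        (hasDerivAt_om (lt_of_le_of_lt hs.2 hat)).continuousAt.continuousWithinAt
  have hB : IntervalIntegrable (fun s => om (1 - ν) (t - s) * u' s) volume a t := by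
    have hne : ∀ s ∈ Icc a t, u s ≠ 0 := fun s hs => hbu ⟨hab.trans hs.1, hs.2⟩
    have h1 : IntervalIntegrable (fun s => om (1 - ν) (t - s) * u' s * u s) volume a t := by
      refine hint.mono_set ?_
      rw [uIcc_of_le hat.le, uIcc_of_le ht.le]
      exact Icc_subset_Icc_left ha0
    have h2 : ContinuousOn (fun s => (u s)⁻¹) (uIcc a t) := by
      rw [uIcc_of_le hat.le]
      exact (hu.mono (Icc_subset_Icc_left ha0)).inv₀ hne
    refine (h1.mul_continuousOn h2).congr ?_
    intro s hs
    rw [uIoc_of_le hat.le] at hs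
    have := hne s ⟨hs.1.le, hs.2⟩
    field_simp
  exact hA.trans hB

/-- For `0 < ν < 1`:  `u(t) ∂₀ₜ^ν u(t) ≥ (1/2) ∂₀ₜ^ν (u²)(t)`. -/
theorem stmt_1 (T ν : ℝ) (hT : 0 < T) (hν0 : 0 < ν) (hν1 : ν < 1)
    (u u' : ℝ → ℝ)
    (hu : ∀ t ∈ Icc (0:ℝ) T, HasDerivAt u (u' t) t)
    (hu'int : IntegrableOn u' (Icc 0 T))
    (t : ℝ) (ht : t ∈ Ioc (0:ℝ) T) :
    (1/2) * ∫ s in (0:ℝ)..t, om (1 - ν) (t - s) * deriv (fun x => (u x)^2) s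
      ≤ u t * ∫ s in (0:ℝ)..t, om (1 - ν) (t - s) * u' s := by
  obtain ⟨ht0, htT⟩ := ht
  have hu1 : ∀ s ∈ Icc (0:ℝ) t, HasDerivAt u (u' s) s :=
    fun s hs => hu s ⟨hs.1, hs.2.trans htT⟩
  have huc : ContinuousOn u (Icc 0 t) := fun s hs => (hu1 s hs).continuousAt.continuousWithinAt
  have hu' : IntervalIntegrable u' volume 0 t :=
    (intervalIntegrable_iff_integrableOn_Icc_of_le ht0.le).2
      (hu'int.mono_set (Icc_subset_Icc_right htT))
  have hL : ∫ s in (0:ℝ)..t, om (1 - ν) (t - s) * deriv (fun x => (u x)^2) s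
      = 2 * ∫ s in (0:ℝ)..t, om (1 - ν) (t - s) * u' s * u s := by
    rw [← intervalIntegral.integral_const_mul]
    refine intervalIntegral.integral_congr fun s hs => ?_
    rw [uIcc_of_le ht0.le] at hs
    have h : deriv (fun x => (u x)^2) s = 2 * u s * u' s := by
      simpa using ((hu1 s hs).fun_pow 2).deriv
    simp only [h]
    ring
  rw [hL]
  by_cases hf : IntervalIntegrable (fun s => om (1 - ν) (t - s) * u' s) volume 0 t
  · have hg : IntervalIntegrable (fun s => om (1 - ν) (t - s) * u' s * u s) volume 0 t :=
      hf.mul_continuousOn (by rwa [uIcc_of_le ht0.le])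
    have heq : (fun s => om (1 - ν) (t - s) * (2 * (u t - u s) * (-u' s))) =
        fun s => 2 * (om (1 - ν) (t - s) * u' s * u s)
          - 2 * u t * (om (1 - ν) (t - s) * u' s) := by
      funext s
      ring
    have hint := (hg.const_mul 2).sub (hf.const_mul (2 * u t))
    have key := integral_kernel_nonpos hν0 hν1 ht0 hu1 (by rw [heq]; exact hint)
    rw [heq, intervalIntegral.integral_sub (hg.const_mul 2) (hf.const_mul (2 * u t)),
      intervalIntegral.integral_const_mul, intervalIntegral.integral_const_mul] at key
    linarith
  -- From here on the right-hand integral diverges, so it has the value `0`.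
  rw [intervalIntegral.integral_undef hf, mul_zero]
  by_cases hg : IntervalIntegrable (fun s => om (1 - ν) (t - s) * u' s * u s) volume 0 t
  · have hut : u t = 0 := by
      by_contra h
      exact hf (intervalIntegrable_of_mul ht0 huc hu' h hg)
    have heq : (fun s => om (1 - ν) (t - s) * (2 * (u t - u s) * (-u' s))) =
        fun s => 2 * (om (1 - ν) (t - s) * u' s * u s) := by
      funext s
      rw [hut]
      ring
    have key := integral_kernel_nonpos hν0 hν1 ht0 hu1 (by rw [heq]; exact hg.const_mul 2)
    rw [heq, intervalIntegral.integral_const_mul] at key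
    linarith
  · rw [intervalIntegral.integral_undef hg]
    simp
end

section
/- Let T > 0 and 0 < γ < 1. If u : [0, T] → ℝ is differentiable with derivative u′ integrable on [0, T], then for every t ∈ (0, T]: ∫₀ᵗ u(s) ∂₀ₛ^γ u(s) ds ≥ (1/2) ∫₀ᵗ ω_{1−γ}(t − s) u(s)² ds − (1/2) ω_{2−γ}(t) u(0)², where ω_{2−γ}(t) = t^{1−γ}/Γ(2 − γ). -/
/-!
Write `k = om (1 - γ)` and `K = om (2 - γ)`, so that `K' = k` and `K 0 = 0`. Integrating by parts
and then exchanging the order of integration (`convolution_om`),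
`½ ∫₀ᵗ k(t-s) u(s)² ds - ½ K(t) u(0)² = ∫₀ᵗ K(t-r) u(r) u'(r) dr`
`= ∫₀ᵗ ∫₀ˢ k(s-r) u(r) u'(r) dr ds`.
The claim therefore says that `∫₀ᵗ ∫₀ˢ k(s-r) (u(s) - u(r)) u'(r) dr ds ≥ 0`, and the inner integral
is already nonnegative for every `s` at which `r ↦ k(s-r) u'(r)` is integrable, that is, for almost
every `s` (`om_pointwise`). There `(u(s) - u(r)) u'(r)` is `-½ d/dr (u(s) - u(r))²` and `k(s-r)`
increases with `r`. The boundary term at `r = a`, as `a → s`, is controlled by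
`k(s-a) |u(s) - u(a)| ≤ ∫₀ˢ k(s-r) |u'(r)| dr`, which leaves a factor `|u(s) - u(a)| → 0`.
-/

open MeasureTheory Set

lemma om_pos {ν x : ℝ} (hν : 0 < ν) (hx : 0 < x) : 0 < om ν x :=
  div_pos (Real.rpow_pos_of_pos hx _) (Real.Gamma_pos_of_pos hν)

/-- Pointwise positivity behind the fractional chain-rule inequality `u ∂^γ u ≥ ½ ∂^γ (u²)`. On
`[0, a]` with `a < s` the integral is computed by parts. The kernel increases with `r`, so its
derivative times `(u s - u r)²` contributes nonnegatively, and only the boundary term at `a` can be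
negative. It disappears as `a → s`. -/
lemma om_pointwise {γ s : ℝ} (hγ0 : 0 < γ) (hγ1 : γ < 1) (hs : 0 < s) {u u' : ℝ → ℝ}
    (hu : ∀ r ∈ Icc (0:ℝ) s, HasDerivAt u (u' r) r)
    (hi : IntervalIntegrable u' volume 0 s)
    (hk : IntervalIntegrable (fun r => om (1 - γ) (s - r) * u' r) volume 0 s) :
    0 ≤ ∫ r in (0:ℝ)..s, om (1 - γ) (s - r) * u' r * (u s - u r) := by
  have hG : 0 < Real.Gamma (1 - γ) := Real.Gamma_pos_of_pos (by linarith)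
  have huc : ContinuousOn u (Icc 0 s) := fun r hr => (hu r hr).continuousAt.continuousWithinAt
  have hvc : ContinuousOn (fun r => u s - u r) (Icc 0 s) := continuousOn_const.sub huc
  have hprod : IntervalIntegrable
      (fun r => om (1 - γ) (s - r) * u' r * (u s - u r)) volume 0 s :=
    hk.mul_continuousOn (by rwa [uIcc_of_le hs.le])
  set M : ℝ := ∫ r in (0:ℝ)..s, |om (1 - γ) (s - r) * u' r| with hM
  have step : ∀ a ∈ Ico (0:ℝ) s, -(1/2 * M * |u s - u a|) ≤
      ∫ r in (0:ℝ)..a, om (1 - γ) (s - r) * u' r * (u s - u r) := by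
    rintro a ⟨ha0, has⟩
    have hsub : Icc 0 a ⊆ Icc 0 s := Icc_subset_Icc_right has.le
    have hpos : ∀ r ∈ Icc 0 a, 0 < s - r := fun r hr => by linarith [hr.2]
    set w' : ℝ → ℝ := fun r => γ * (s - r) ^ (-γ - 1) / Real.Gamma (1 - γ) with hw'
    have hw : ∀ r ∈ Icc 0 a, HasDerivAt (fun r => om (1 - γ) (s - r)) (w' r) r := by
      intro r hr
      have h1 : HasDerivAt (fun r : ℝ => s - r) (-1) r := by
        simpa using (hasDerivAt_id r).const_sub s
      have h2 := (h1.rpow_const (p := -γ) (Or.inl (hpos r hr).ne')).div_const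
        (Real.Gamma (1 - γ))
      have e : (fun r => om (1 - γ) (s - r)) =
          fun r => (s - r) ^ (-γ) / Real.Gamma (1 - γ) := by
        funext r; rw [om, show 1 - γ - 1 = -γ by ring]
      rw [e]
      refine h2.congr_deriv ?_
      simp only [hw']; ring
    have hg : ∀ r ∈ uIcc 0 a, HasDerivAt (fun r => om (1 - γ) (s - r) * (u s - u r) ^ 2)
        (w' r * (u s - u r) ^ 2 - 2 * (om (1 - γ) (s - r) * u' r * (u s - u r))) r := by
      intro r hr
      rw [uIcc_of_le ha0] at hr
      have h := (hw r hr).fun_mul (((hu r (hsub hr)).const_sub (u s)).fun_pow 2)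
      refine h.congr_deriv ?_
      push_cast; ring
    have hA : IntervalIntegrable (fun r => w' r * (u s - u r) ^ 2) volume 0 a := by
      apply ContinuousOn.intervalIntegrable
      rw [uIcc_of_le ha0]
      refine ContinuousOn.mul ?_ ((hvc.mono hsub).pow 2)
      refine ContinuousOn.div_const (ContinuousOn.mul continuousOn_const ?_) _
      exact ContinuousOn.rpow_const (by fun_prop) fun r hr => Or.inl (hpos r hr).ne'
    have hB : IntervalIntegrable
        (fun r => 2 * (om (1 - γ) (s - r) * u' r * (u s - u r))) volume 0 a :=
      (hprod.mono_set (by rw [uIcc_of_le ha0, uIcc_of_le hs.le]; exact hsub)).const_mul 2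
    have hftc := intervalIntegral.integral_eq_sub_of_hasDerivAt hg (hA.sub hB)
    rw [intervalIntegral.integral_sub hA hB, intervalIntegral.integral_const_mul] at hftc
    have hA0 : 0 ≤ ∫ r in (0:ℝ)..a, w' r * (u s - u r) ^ 2 := by
      refine intervalIntegral.integral_nonneg ha0 fun r hr => ?_
      have := Real.rpow_pos_of_pos (hpos r hr) (-γ - 1)
      simp only [hw']; positivity
    have hg0 : 0 ≤ om (1 - γ) (s - 0) * (u s - u 0) ^ 2 :=
      mul_nonneg (om_pos (by linarith) (by linarith)).le (sq_nonneg _)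
    have hsub2 : uIcc a s ⊆ uIcc 0 s := by
      rw [uIcc_of_le has.le, uIcc_of_le hs.le]; exact Icc_subset_Icc_left ha0
    -- Since `r ↦ om (1 - γ) (s - r)` increases, its value at `a` can be moved inside `∫ₐˢ |u'|`.
    have hbd : om (1 - γ) (s - a) * |u s - u a| ≤ M := by
      have hop := om_pos (ν := 1 - γ) (x := s - a) (by linarith) (by linarith)
      have hia := hi.mono_set hsub2
      have hka := hk.mono_set hsub2
      have e1 : u s - u a = ∫ r in a..s, u' r := by
        rw [intervalIntegral.integral_eq_sub_of_hasDerivAt _ hia]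
        intro r hr
        exact hu r (by have := hsub2 hr; rwa [uIcc_of_le hs.le] at this)
      calc om (1 - γ) (s - a) * |u s - u a|
          ≤ om (1 - γ) (s - a) * ∫ r in a..s, |u' r| := by
            rw [e1]
            exact mul_le_mul_of_nonneg_left
              (intervalIntegral.abs_integral_le_integral_abs has.le) hop.le
        _ = ∫ r in a..s, om (1 - γ) (s - a) * |u' r| := by
            rw [intervalIntegral.integral_const_mul]
        _ ≤ ∫ r in a..s, |om (1 - γ) (s - r) * u' r| := by
            refine intervalIntegral.integral_mono_on_of_le_Ioo has.le (hia.abs.const_mul _)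
              hka.abs fun r hr => ?_
            rw [abs_mul]
            refine mul_le_mul_of_nonneg_right (le_trans ?_ (le_abs_self _)) (abs_nonneg _)
            refine div_le_div_of_nonneg_right ?_ hG.le
            exact Real.rpow_le_rpow_of_nonpos (by linarith [hr.2]) (by linarith [hr.1])
              (by linarith)
        _ ≤ M := by
            rw [hM]
            refine intervalIntegral.integral_mono_interval ha0 has.le le_rfl ?_ hk.abs
            exact Filter.Eventually.of_forall fun r => abs_nonneg _
    have hga : om (1 - γ) (s - a) * (u s - u a) ^ 2 ≤ M * |u s - u a| := by
      rw [← sq_abs, sq, ← mul_assoc]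
      exact mul_le_mul_of_nonneg_right hbd (abs_nonneg _)
    linarith
  have hne : (nhdsWithin s (Ico 0 s)).NeBot := by
    rw [← mem_closure_iff_nhdsWithin_neBot, closure_Ico hs.ne]
    exact right_mem_Icc.2 hs.le
  have hlim1 : Filter.Tendsto (fun a => ∫ r in (0:ℝ)..a,
      om (1 - γ) (s - r) * u' r * (u s - u r)) (nhdsWithin s (Ico 0 s))
      (nhds (∫ r in (0:ℝ)..s, om (1 - γ) (s - r) * u' r * (u s - u r))) := by
    have h := intervalIntegral.continuousOn_primitive_interval' hprod left_mem_uIcc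
    rw [uIcc_of_le hs.le] at h
    exact (h s (right_mem_Icc.2 hs.le)).mono_left (nhdsWithin_mono _ Ico_subset_Icc_self)
  have hlim2 : Filter.Tendsto (fun a => -(1/2 * M * |u s - u a|)) (nhdsWithin s (Ico 0 s))
      (nhds 0) := by
    have h : ContinuousWithinAt (fun a => -(1/2 * M * |u s - u a|)) (Ico 0 s) s :=
      (((hvc s (right_mem_Icc.2 hs.le)).mono Ico_subset_Icc_self).abs.const_mul _).neg
    simpa [ContinuousWithinAt] using h
  exact le_of_tendsto_of_tendsto hlim2 hlim1 (eventually_mem_nhdsWithin.mono step)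

lemma Gamma_two_sub {γ : ℝ} (hγ1 : γ < 1) :
    Real.Gamma (2 - γ) = (1 - γ) * Real.Gamma (1 - γ) := by
  rw [← Real.Gamma_add_one (by linarith : (1 - γ) ≠ 0)]
  congr 1; ring

lemma intervalIntegrable_om {γ : ℝ} (hγ1 : γ < 1) (a b : ℝ) :
    IntervalIntegrable (om (1 - γ)) volume a b :=
  (intervalIntegral.intervalIntegrable_rpow' (by linarith)).div_const _

lemma integral_om {γ : ℝ} (hγ1 : γ < 1) (x : ℝ) :
    ∫ s in (0:ℝ)..x, om (1 - γ) s = om (2 - γ) x := by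
  have hG : 0 < Real.Gamma (1 - γ) := Real.Gamma_pos_of_pos (by linarith)
  have h1 : 1 - γ ≠ 0 := by linarith
  simp only [om]
  rw [intervalIntegral.integral_div, integral_rpow (Or.inl (by linarith)), Gamma_two_sub hγ1,
    show 1 - γ - 1 + 1 = 1 - γ by ring, Real.zero_rpow h1, sub_zero, div_div,
    show 2 - γ - 1 = 1 - γ by ring]

lemma hasDerivAt_om_s2 {γ x : ℝ} (hγ1 : γ < 1) (hx : 0 < x) :
    HasDerivAt (om (2 - γ)) (om (1 - γ) x) x := by
  have hG : 0 < Real.Gamma (1 - γ) := Real.Gamma_pos_of_pos (by linarith)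
  have h1 : 1 - γ ≠ 0 := by linarith
  have h := (Real.hasDerivAt_rpow_const (p := 2 - γ - 1) (Or.inl hx.ne')).div_const
    (Real.Gamma (2 - γ))
  refine h.congr_deriv ?_
  rw [om, Gamma_two_sub hγ1, show 2 - γ - 1 = 1 - γ by ring]
  field_simp

lemma continuous_om {γ : ℝ} (hγ1 : γ < 1) : Continuous (om (2 - γ)) :=
  (Real.continuous_rpow_const (by linarith)).div_const _

/-- The singularity of the kernel is hidden by the convention `0 ^ x = 0` for `x ≠ 0`. -/
lemma om_zero {γ : ℝ} (hγ0 : 0 < γ) : om (1 - γ) 0 = 0 := by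
  rw [om, Real.zero_rpow (by linarith), zero_div]

/-- The convolution of an integrable `h` with the kernel `om (1 - γ)` exists almost everywhere, is
integrable, and integrates to the convolution of `h` with the primitive `om (2 - γ)` of the
kernel. This is Fubini applied to the truncations of both functions to `(0, t]`. -/
lemma convolution_om {γ t : ℝ} (hγ0 : 0 < γ) (hγ1 : γ < 1) (ht : 0 < t) {h : ℝ → ℝ}
    (hh : IntegrableOn h (Ioc 0 t)) :
    IntegrableOn (fun s => ∫ r in (0:ℝ)..s, om (1 - γ) (s - r) * h r) (Ioc 0 t) ∧
    (∀ᵐ s ∂volume.restrict (Ioc 0 t),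
      IntervalIntegrable (fun r => om (1 - γ) (s - r) * h r) volume 0 s) ∧
    ∫ s in (0:ℝ)..t, ∫ r in (0:ℝ)..s, om (1 - γ) (s - r) * h r =
      ∫ r in (0:ℝ)..t, om (2 - γ) (t - r) * h r := by
  set f : ℝ → ℝ := (Ioc 0 t).indicator h with hf
  set κ : ℝ → ℝ := (Ioc 0 t).indicator (om (1 - γ)) with hκ
  have hfi : Integrable f := hh.integrable_indicator measurableSet_Ioc
  have hκi : Integrable κ := (((intervalIntegrable_iff_integrableOn_Ioc_of_le ht.le).1
    (intervalIntegrable_om hγ1 0 t))).integrable_indicator measurableSet_Ioc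
  have hP : Integrable (fun p : ℝ × ℝ => f p.2 * κ (p.1 - p.2)) (volume.prod volume) := by
    simpa using hfi.convolution_integrand (ContinuousLinearMap.mul ℝ ℝ) hκi
  have hrow : ∀ s ∈ Ioc 0 t, (fun r => f r * κ (s - r)) =
      (Ioc 0 s).indicator (fun r => om (1 - γ) (s - r) * h r) := by
    intro s hs
    funext r
    by_cases hr : r ∈ Ioc 0 s
    · rw [indicator_of_mem hr, hf, indicator_of_mem (show r ∈ Ioc 0 t from ⟨hr.1, hr.2.trans hs.2⟩), mul_comm]
      congr 1
      -- On the diagonal `r = s` both sides vanish, because `om (1 - γ) 0 = 0`.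
      rcases hr.2.eq_or_lt with rfl | hlt
      · simp [hκ, om_zero hγ0]
      · rw [hκ, indicator_of_mem]
        exact ⟨by linarith, by linarith [hr.1, hs.2]⟩
    · rw [indicator_of_notMem hr]
      by_cases hr0 : 0 < r
      · rw [hκ, indicator_of_notMem, mul_zero]
        exact fun hc => hr ⟨hr0, by linarith [hc.1]⟩
      · rw [hf, indicator_of_notMem (fun hc => hr0 hc.1), zero_mul]
  have hrowi : ∀ s ∈ Ioc 0 t, ∫ r, f r * κ (s - r) =
      ∫ r in (0:ℝ)..s, om (1 - γ) (s - r) * h r := by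
    intro s hs
    rw [hrow s hs, integral_indicator measurableSet_Ioc,
      intervalIntegral.integral_of_le hs.1.le]
  refine ⟨?_, ?_, ?_⟩
  · exact (hP.integral_prod_left.integrableOn (s := Ioc 0 t)).congr_fun hrowi measurableSet_Ioc
  · filter_upwards [ae_restrict_of_ae hP.prod_right_ae, ae_restrict_mem measurableSet_Ioc]
      with s hs hmem
    rw [intervalIntegrable_iff_integrableOn_Ioc_of_le hmem.1.le,
      ← integrable_indicator_iff measurableSet_Ioc, ← hrow s hmem]
    exact hs
  · have hP' : Integrable (Function.uncurry fun s r => f r * κ (s - r))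
        ((volume.restrict (Ioc 0 t)).prod volume) := by
      refine hP.mono_measure ?_
      exact Measure.prod_mono Measure.restrict_le_self le_rfl
    rw [intervalIntegral.integral_of_le ht.le, ← setIntegral_congr_fun measurableSet_Ioc hrowi,
      integral_integral_swap hP', intervalIntegral.integral_of_le ht.le,
      ← integral_indicator measurableSet_Ioc]
    congr 1
    funext r
    rw [integral_const_mul]
    by_cases hr : r ∈ Ioc 0 t
    · have hcol : (∫ s in Ioc 0 t, κ (s - r)) = om (2 - γ) (t - r) := by
        have e : EqOn (fun s => κ (s - r))
            ((Ioc r t).indicator fun s => om (1 - γ) (s - r)) (Ioc 0 t) := by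
          intro s hs
          simp only [hκ, indicator_apply, mem_Ioc, sub_pos]
          have : s - r ≤ t := by linarith [hs.2, hr.1]
          simp [this, hs.2]
        rw [setIntegral_congr_fun measurableSet_Ioc e, setIntegral_indicator measurableSet_Ioc,
          inter_eq_self_of_subset_right (Ioc_subset_Ioc_left hr.1.le),
          ← intervalIntegral.integral_of_le hr.2,
          intervalIntegral.integral_comp_sub_right (om (1 - γ)) r, sub_self, integral_om hγ1]
      rw [hcol, indicator_of_mem hr, hf, indicator_of_mem hr, mul_comm]
    · rw [indicator_of_notMem hr, hf, indicator_of_notMem hr, zero_mul]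

/-- For `0 < γ < 1`:
`∫₀ᵗ u(s) ∂₀ₛ^γ u(s) ds ≥ (1/2) D₀ₜ^{γ-1} u²(t) − (1/2) ω_{2-γ}(t) u(0)²`. -/
theorem stmt_2 (T γ : ℝ) (hT : 0 < T) (hγ0 : 0 < γ) (hγ1 : γ < 1)
    (u u' : ℝ → ℝ)
    (hu : ∀ t ∈ Icc (0:ℝ) T, HasDerivAt u (u' t) t)
    (hu'int : IntegrableOn u' (Icc 0 T))
    (t : ℝ) (ht : t ∈ Ioc (0:ℝ) T) :
    (1/2) * (∫ s in (0:ℝ)..t, om (1 - γ) (t - s) * (u s)^2)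
      - (1/2) * om (2 - γ) t * (u 0)^2
    ≤ ∫ s in (0:ℝ)..t, u s * ∫ r in (0:ℝ)..s, om (1 - γ) (s - r) * u' r := by
  obtain ⟨ht0, htT⟩ := ht
  have huc : ContinuousOn u (Icc 0 t) := fun r hr =>
    (hu r ⟨hr.1, hr.2.trans htT⟩).continuousAt.continuousWithinAt
  have huc' : ContinuousOn u (uIcc 0 t) := by rwa [uIcc_of_le ht0.le]
  have hu'c : IntegrableOn u' (Ioc 0 t) :=
    hu'int.mono_set (Ioc_subset_Icc_self.trans (Icc_subset_Icc_right htT))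
  have hi : IntervalIntegrable u' volume 0 t :=
    (intervalIntegrable_iff_integrableOn_Ioc_of_le ht0.le).2 hu'c
  have hui : IntervalIntegrable (fun r => u' r * u r) volume 0 t := hi.mul_continuousOn huc'
  have huu : IntegrableOn (fun r => u' r * u r) (Ioc 0 t) :=
    (intervalIntegrable_iff_integrableOn_Ioc_of_le ht0.le).1 hui
  obtain ⟨a1, a2, -⟩ := convolution_om hγ0 hγ1 ht0 hu'c
  obtain ⟨b1, b2, b3⟩ := convolution_om hγ0 hγ1 ht0 huu
  -- Integration by parts with `r ↦ om (2 - γ) (t - r) * u r ^ 2`, which vanishes at `r = t`.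
  have hparts : (1/2) * (∫ s in (0:ℝ)..t, om (1 - γ) (t - s) * (u s)^2)
      - (1/2) * om (2 - γ) t * (u 0)^2 = ∫ r in (0:ℝ)..t, om (2 - γ) (t - r) * (u' r * u r) := by
    have hK : ContinuousOn (fun r => om (2 - γ) (t - r)) (Icc 0 t) :=
      ((continuous_om hγ1).comp (continuous_const.sub continuous_id)).continuousOn
    have hA : IntervalIntegrable (fun s => om (1 - γ) (t - s) * (u s)^2) volume 0 t := by
      refine IntervalIntegrable.mul_continuousOn ?_ (huc'.pow 2)
      simpa using ((intervalIntegrable_om hγ1 0 t).comp_sub_left t).symm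
    have hB : IntervalIntegrable (fun r => 2 * (om (2 - γ) (t - r) * (u' r * u r))) volume 0 t :=
      (hui.continuousOn_mul (by rwa [uIcc_of_le ht0.le])).const_mul 2
    have hftc := intervalIntegral.integral_eq_sub_of_hasDerivAt_of_le ht0.le
      (f := fun r => om (2 - γ) (t - r) * (u r) ^ 2)
      (hK.mul (huc.pow 2)) (fun r hr => ?_) (hB.sub hA)
    · rw [intervalIntegral.integral_sub hB hA, intervalIntegral.integral_const_mul] at hftc
      have h0 : om (2 - γ) (t - t) = 0 := by
        rw [om, sub_self, Real.zero_rpow (by linarith), zero_div]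
      simp only [h0, sub_zero] at hftc
      linarith
    · have h1 : HasDerivAt (fun r : ℝ => t - r) (-1) r := by
        simpa using (hasDerivAt_id r).const_sub t
      have h2 := (hasDerivAt_om_s2 hγ1 (sub_pos.2 hr.2)).comp r h1
      have h3 := h2.fun_mul ((hu r ⟨hr.1.le, hr.2.le.trans htT⟩).fun_pow 2)
      refine h3.congr_deriv ?_
      simp only [Function.comp_apply]
      push_cast; ring
  rw [hparts, ← b3, intervalIntegral.integral_of_le ht0.le, intervalIntegral.integral_of_le ht0.le]
  have hI : IntegrableOn (fun s => u s * ∫ r in (0:ℝ)..s, om (1 - γ) (s - r) * u' r)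
      (Ioc 0 t) := by
    rw [← intervalIntegrable_iff_integrableOn_Ioc_of_le ht0.le] at a1 ⊢
    exact a1.continuousOn_mul huc'
  refine setIntegral_mono_ae_restrict b1 hI ?_
  filter_upwards [a2, b2, ae_restrict_mem measurableSet_Ioc] with s h1 h2 hs
  have hss : uIcc 0 s ⊆ uIcc 0 t := by
    rw [uIcc_of_le hs.1.le, uIcc_of_le ht0.le]; exact Icc_subset_Icc_right hs.2
  have hpt := om_pointwise hγ0 hγ1 hs.1
    (fun r hr => hu r ⟨hr.1, hr.2.trans (hs.2.trans htT)⟩) (hi.mono_set hss) h1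
  rw [← sub_nonneg, ← intervalIntegral.integral_const_mul,
    ← intervalIntegral.integral_sub (h1.const_mul _) h2]
  refine hpt.trans_eq (intervalIntegral.integral_congr fun r _ => ?_)
  ring
end

section
/- Let T > 0 and 0 < δ < 1. For every continuous function u : [0, T] → ℝ and every t ∈ [0, T]: ∫₀ᵗ u(s) D₀ₛ^{−δ} u(s) ds ≥ 0, where D₀ₛ^{−δ} u(s) = ∫₀ˢ ω_δ(s − η) u(η) dη. -/
/-!
The kernel `r ^ (δ - 1)` is a positive superposition of decaying exponentials:
`Γ(1-δ) r^{δ-1} = ∫₀^∞ x^{-δ} e^{-rx} dx` for `r > 0`. By Fubini, `∫₀ᵗ u D^{-δ}u` is therefore, up to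
a positive factor, `∫₀^∞ x^{-δ} (∫₀ᵗ u v_x) dx`, where `v_x(s) = ∫₀ˢ e^{-(s-η)x} u(η) dη`
(`integral_kernel`, `integral_kernel_nonneg`). Since `v_x' = u - x v_x` and `v_x(0) = 0`, the inner
integral equals `v_x(t)²/2 + x ∫₀ᵗ v_x² ≥ 0` (`integral_mul_expMem_nonneg`). The second use of Fubini
rests on the bound `|v_x(s)| ≤ sup |u| * min t (1/x)` (`abs_expMem_le`).
-/

open MeasureTheory Set

/-- The exponential memory `∫₀ˢ e^{-(s-η)x} u(η) dη`, i.e. the solution at time `s` of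
`v' = u - x v`, `v(0) = 0`. -/
noncomputable def expMem (u : ℝ → ℝ) (x s : ℝ) : ℝ :=
  ∫ η in (0:ℝ)..s, Real.exp (-((s - η) * x)) * u η

lemma hasDerivAt_expMem {u : ℝ → ℝ} (hu : Continuous u) (x s : ℝ) :
    HasDerivAt (expMem u x) (u s - x * expMem u x s) s := by
  have key : expMem u x = fun s => Real.exp (-(s * x)) *
      ∫ η in (0:ℝ)..s, Real.exp (η * x) * u η := by
    funext s
    rw [expMem, ← intervalIntegral.integral_const_mul]
    congr 1
    funext η
    rw [← mul_assoc, ← Real.exp_add]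
    ring_nf
  have hc : Continuous fun η => Real.exp (η * x) * u η := by fun_prop
  have h1 := intervalIntegral.integral_hasDerivAt_right (hc.intervalIntegrable 0 s)
    (hc.stronglyMeasurableAtFilter _ _) hc.continuousAt
  have h2 : HasDerivAt (fun s : ℝ => Real.exp (-(s * x))) (Real.exp (-(s * x)) * -(1 * x)) s :=
    (((hasDerivAt_id s).mul_const x).neg).exp
  rw [key]
  refine (h2.mul h1).congr_deriv ?_
  have : Real.exp (-(s * x)) * (Real.exp (s * x) * u s) = u s := by
    rw [← mul_assoc, ← Real.exp_add]; simp
  rw [this]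
  ring

/-- Energy identity: `∫₀ᵗ u v = v(t)²/2 + x ∫₀ᵗ v²` for the solution `v` of `v' = u - x v`,
`v(0) = 0`. -/
lemma integral_mul_expMem_nonneg {u : ℝ → ℝ} (hu : Continuous u) {x t : ℝ} (hx : 0 ≤ x)
    (ht : 0 ≤ t) : 0 ≤ ∫ s in (0:ℝ)..t, u s * expMem u x s := by
  have hv : Continuous (expMem u x) :=
    continuous_iff_continuousAt.2 fun s => (hasDerivAt_expMem hu x s).continuousAt
  have h1 := intervalIntegral.integral_eq_sub_of_hasDerivAt (a := 0) (b := t)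
    (f := fun s => expMem u x s * expMem u x s)
    (fun s _ => (hasDerivAt_expMem hu x s).mul (hasDerivAt_expMem hu x s))
    (Continuous.intervalIntegrable (by fun_prop) _ _)
  have h0 : expMem u x 0 = 0 := by simp [expMem]
  have h2 : ∫ s in (0:ℝ)..t, u s * expMem u x s
      = (1 / 2) * (∫ s in (0:ℝ)..t, ((u s - x * expMem u x s) * expMem u x s
          + expMem u x s * (u s - x * expMem u x s)))
        + x * ∫ s in (0:ℝ)..t, expMem u x s ^ 2 := by
    rw [← intervalIntegral.integral_const_mul, ← intervalIntegral.integral_const_mul,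
      ← intervalIntegral.integral_add (Continuous.intervalIntegrable (by fun_prop) _ _)
        (Continuous.intervalIntegrable (by fun_prop) _ _)]
    congr 1
    funext s
    ring
  have h3 : 0 ≤ ∫ s in (0:ℝ)..t, expMem u x s ^ 2 :=
    intervalIntegral.integral_nonneg ht fun s _ => sq_nonneg _
  rw [h2, h1, h0]
  nlinarith [mul_nonneg hx h3, mul_self_nonneg (expMem u x t)]

lemma continuous_expMem {u : ℝ → ℝ} (hu : Continuous u) :
    Continuous fun p : ℝ × ℝ => expMem u p.2 p.1 := by
  unfold expMem
  exact intervalIntegral.continuous_parametric_intervalIntegral_of_continuous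
    (f := fun (p : ℝ × ℝ) η => Real.exp (-((p.1 - η) * p.2)) * u η) (by fun_prop) continuous_fst

/-- The bound that makes `x ^ (-δ) * expMem u x s` integrable both at `x = 0` and at `x = ∞`. -/
lemma abs_expMem_le {u : ℝ → ℝ} {M x s t : ℝ} (hx : 0 < x) (hs : 0 ≤ s)
    (hst : s ≤ t) (hM : ∀ η, |u η| ≤ M) : |expMem u x s| ≤ M * min t (1 / x) := by
  have hM0 : 0 ≤ M := (abs_nonneg _).trans (hM 0)
  have hc : Continuous fun η => Real.exp (-((s - η) * x)) := by fun_prop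
  have h1 : |expMem u x s| ≤ ∫ η in (0:ℝ)..s, M * Real.exp (-((s - η) * x)) := by
    rw [← Real.norm_eq_abs, expMem]
    refine intervalIntegral.norm_integral_le_of_norm_le hs (Filter.Eventually.of_forall ?_)
      ((continuous_const.mul hc).intervalIntegrable (μ := volume) 0 s)
    intro η _
    rw [norm_mul, Real.norm_eq_abs, Real.norm_eq_abs, abs_of_pos (Real.exp_pos _), mul_comm]
    exact mul_le_mul_of_nonneg_right (hM η) (Real.exp_pos _).le
  rw [intervalIntegral.integral_const_mul] at h1
  refine h1.trans (mul_le_mul_of_nonneg_left (le_min ?_ ?_) hM0)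
  · calc _ ≤ ∫ η in (0:ℝ)..s, (1:ℝ) := by
          refine intervalIntegral.integral_mono_on hs (hc.intervalIntegrable _ _)
            (by simp) ?_
          intro η hη
          rw [Real.exp_le_one_iff]
          nlinarith [mul_nonneg (sub_nonneg.2 hη.2) hx.le]
      _ ≤ t := by simpa using hst
  · have hd : ∀ η ∈ uIcc 0 s, HasDerivAt (fun η => Real.exp (-((s - η) * x)) / x)
        (Real.exp (-((s - η) * x))) η := by
      intro η _
      have : HasDerivAt (fun η => Real.exp (-((s - η) * x)) / x)
          (Real.exp (-((s - η) * x)) * -(-1 * x) / x) η :=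
        (((((hasDerivAt_id η).const_sub s).mul_const x).neg).exp).div_const x
      convert this using 1
      field_simp
    rw [intervalIntegral.integral_eq_sub_of_hasDerivAt hd (hc.intervalIntegrable _ _)]
    have : 0 ≤ Real.exp (-((s - 0) * x)) / x := by positivity
    simp only [sub_self, zero_mul, neg_zero, Real.exp_zero]
    linarith

lemma integral_laplace {δ r : ℝ} (hδ1 : δ < 1) (hr : 0 < r) :
    ∫ x in Ioi (0:ℝ), x ^ (-δ) * Real.exp (-(r * x)) = Real.Gamma (1 - δ) * r ^ (δ - 1) := by
  have h := Real.integral_rpow_mul_exp_neg_mul_Ioi (a := 1 - δ) (by linarith) hr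
  rw [show (1 - δ - 1) = -δ by ring] at h
  rw [h, one_div, Real.inv_rpow hr.le, ← Real.rpow_neg hr.le, neg_sub, mul_comm]

lemma integrable_laplace {δ r : ℝ} (hδ1 : δ < 1) (hr : 0 < r) :
    IntegrableOn (fun x : ℝ => x ^ (-δ) * Real.exp (-(r * x))) (Ioi 0) := by
  apply Integrable.of_integral_ne_zero
  rw [integral_laplace hδ1 hr]
  have := Real.Gamma_pos_of_pos (sub_pos.2 hδ1)
  positivity

lemma intervalIntegrable_kernel {δ s : ℝ} (hδ0 : 0 < δ) :
    IntervalIntegrable (fun η => (s - η) ^ (δ - 1)) volume 0 s := by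
  have h := (intervalIntegral.intervalIntegrable_rpow' (a := 0) (b := s)
    (r := δ - 1) (by linarith)).comp_sub_left s
  simpa using h.symm

/-- Subordination: the fractional integral is a superposition of exponential memories, since
`Γ(1-δ) r^{δ-1} = ∫₀^∞ x^{-δ} e^{-rx} dx`. -/
lemma integral_kernel {u : ℝ → ℝ} (hu : Continuous u) {δ s : ℝ} (hδ0 : 0 < δ) (hδ1 : δ < 1)
    (hs : 0 ≤ s) :
    Real.Gamma (1 - δ) * ∫ η in (0:ℝ)..s, (s - η) ^ (δ - 1) * u η
      = ∫ x in Ioi (0:ℝ), x ^ (-δ) * expMem u x s := by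
  -- The endpoint `η = s`, where the Laplace representation fails, is a null set.
  have hae : ∀ᵐ η ∂(volume.restrict (Ioc 0 s)), η < s := by
    rw [← restrict_Ioo_eq_restrict_Ioc]
    exact (ae_restrict_mem measurableSet_Ioo).mono fun η h => h.2
  have hint : Integrable (Function.uncurry fun η x : ℝ =>
      x ^ (-δ) * Real.exp (-((s - η) * x)) * u η)
      ((volume.restrict (Ioc 0 s)).prod (volume.restrict (Ioi 0))) := by
    have hmeas : Measurable (Function.uncurry fun η x : ℝ =>
        x ^ (-δ) * Real.exp (-((s - η) * x)) * u η) := by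
      have := hu.measurable
      unfold Function.uncurry
      fun_prop
    rw [integrable_prod_iff hmeas.aestronglyMeasurable]
    refine ⟨hae.mono fun η h => (integrable_laplace hδ1 (sub_pos.2 h)).mul_const (u η), ?_⟩
    have h1 : Integrable (fun η => Real.Gamma (1 - δ) * ((s - η) ^ (δ - 1) * |u η|))
        (volume.restrict (Ioc 0 s)) := by
      refine Integrable.const_mul ?_ _
      have := (intervalIntegrable_kernel (s := s) hδ0).mul_continuousOn (g := fun η => |u η|)
        hu.abs.continuousOn
      exact (intervalIntegrable_iff_integrableOn_Ioc_of_le hs).1 this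
    refine h1.congr (hae.mono fun η h => ?_)
    simp only [Function.uncurry]
    rw [← mul_assoc, ← integral_laplace hδ1 (sub_pos.2 h), ← integral_mul_const]
    refine setIntegral_congr_fun measurableSet_Ioi fun x hx => ?_
    have hx' : (0:ℝ) < x := hx
    have : 0 ≤ x ^ (-δ) * Real.exp (-((s - η) * x)) := by positivity
    simp only [norm_mul _ (u η), Real.norm_eq_abs, abs_of_nonneg this]
  have hswap := integral_integral_swap hint
  rw [← intervalIntegral.integral_const_mul, intervalIntegral.integral_of_le hs]
  calc _ = ∫ η in Ioc 0 s, ∫ x in Ioi (0:ℝ), x ^ (-δ) * Real.exp (-((s - η) * x)) * u η := by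
        refine integral_congr_ae (hae.mono fun η h => ?_)
        simp only
        rw [← mul_assoc, ← integral_laplace hδ1 (sub_pos.2 h), ← integral_mul_const]
    _ = _ := hswap
    _ = _ := by
        congr 1
        funext x
        rw [expMem, intervalIntegral.integral_of_le hs, ← integral_const_mul]
        simp only [mul_assoc]

lemma integrable_rpow_mul_min {δ t : ℝ} (hδ0 : 0 < δ) (hδ1 : δ < 1) (ht : 0 ≤ t) :
    IntegrableOn (fun x : ℝ => x ^ (-δ) * min t (1 / x)) (Ioi 0) := by
  have hm : Measurable fun x : ℝ => x ^ (-δ) * min t (1 / x) := by fun_prop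
  rw [← Ioc_union_Ioi_eq_Ioi zero_le_one]
  refine IntegrableOn.union ?_ ?_
  · have h := ((intervalIntegrable_iff_integrableOn_Ioc_of_le zero_le_one).1
      (intervalIntegral.intervalIntegrable_rpow' (a := 0) (b := 1) (r := -δ)
        (by linarith))).mul_const t
    refine Integrable.mono' h hm.aestronglyMeasurable
      ((ae_restrict_mem measurableSet_Ioc).mono fun x hx => ?_)
    have hx0 : 0 < x := hx.1
    have : 0 ≤ min t (1 / x) := le_min ht (by positivity)
    rw [Real.norm_of_nonneg (by positivity)]
    exact mul_le_mul_of_nonneg_left (min_le_left _ _) (by positivity)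
  · refine Integrable.mono' (integrableOn_Ioi_rpow_of_lt (a := -δ - 1) (by linarith) zero_lt_one)
      hm.aestronglyMeasurable ((ae_restrict_mem measurableSet_Ioi).mono fun x hx => ?_)
    have hx0 : 0 < x := zero_lt_one.trans hx
    have : 0 ≤ min t (1 / x) := le_min ht (by positivity)
    rw [Real.norm_of_nonneg (by positivity), Real.rpow_sub_one hx0.ne', div_eq_mul_one_div (x ^ (-δ))]
    exact mul_le_mul_of_nonneg_left (min_le_right _ _) (by positivity)

lemma integral_kernel_nonneg {u : ℝ → ℝ} (hu : Continuous u) {M : ℝ} (hM : ∀ η, |u η| ≤ M)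
    {δ t : ℝ} (hδ0 : 0 < δ) (hδ1 : δ < 1) (ht : 0 ≤ t) :
    0 ≤ ∫ s in (0:ℝ)..t, u s * ∫ η in (0:ℝ)..s, (s - η) ^ (δ - 1) * u η := by
  have hM0 : 0 ≤ M := (abs_nonneg _).trans (hM 0)
  have hint : Integrable (Function.uncurry fun s x : ℝ => u s * (x ^ (-δ) * expMem u x s))
      ((volume.restrict (Ioc 0 t)).prod (volume.restrict (Ioi 0))) := by
    have hmeas : Measurable (Function.uncurry fun s x : ℝ =>
        u s * (x ^ (-δ) * expMem u x s)) := by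
      have h1 := hu.measurable
      have h2 := (continuous_expMem hu).measurable
      unfold Function.uncurry
      fun_prop
    have hb : Integrable (fun p : ℝ × ℝ => (M * M) * (p.2 ^ (-δ) * min t (1 / p.2)))
        ((volume.restrict (Ioc 0 t)).prod (volume.restrict (Ioi 0))) :=
      (integrable_const (M * M)).mul_prod (integrable_rpow_mul_min hδ0 hδ1 ht)
    refine hb.mono' hmeas.aestronglyMeasurable ?_
    rw [Measure.prod_restrict]
    refine (ae_restrict_mem (measurableSet_Ioc.prod measurableSet_Ioi)).mono ?_
    rintro ⟨s, x⟩ ⟨hs, hx⟩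
    have hx0 : (0:ℝ) < x := hx
    have hxp : 0 ≤ x ^ (-δ) := by positivity
    have h1 := abs_expMem_le hx0 hs.1.le hs.2 hM
    simp only [Function.uncurry, norm_mul, Real.norm_eq_abs, abs_of_nonneg hxp]
    calc |u s| * (x ^ (-δ) * |expMem u x s|)
        ≤ M * (x ^ (-δ) * (M * min t (1 / x))) := by gcongr; exact hM s
      _ = _ := by ring
  have hG := Real.Gamma_pos_of_pos (sub_pos.2 hδ1)
  refine nonneg_of_mul_nonneg_right (a := Real.Gamma (1 - δ)) ?_ hG
  have hswap := integral_integral_swap hint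
  have heq : Real.Gamma (1 - δ) *
      (∫ s in (0:ℝ)..t, u s * ∫ η in (0:ℝ)..s, (s - η) ^ (δ - 1) * u η)
      = ∫ x in Ioi (0:ℝ), ∫ s in Ioc 0 t, u s * (x ^ (-δ) * expMem u x s) := by
    rw [← hswap, ← intervalIntegral.integral_const_mul, intervalIntegral.integral_of_le ht]
    refine setIntegral_congr_fun measurableSet_Ioc fun s hs => ?_
    rw [integral_const_mul, ← integral_kernel hu hδ0 hδ1 hs.1.le]
    ring
  rw [heq]
  refine setIntegral_nonneg measurableSet_Ioi fun x hx => ?_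
  have hx0 : (0:ℝ) < x := hx
  have h1 := integral_mul_expMem_nonneg hu hx0.le ht
  rw [intervalIntegral.integral_of_le ht] at h1
  have h2 : ∫ s in Ioc 0 t, u s * (x ^ (-δ) * expMem u x s)
      = x ^ (-δ) * ∫ s in Ioc 0 t, u s * expMem u x s := by
    rw [← integral_const_mul]
    congr 1
    funext s
    ring
  rw [h2]
  positivity

/-- For `0 < δ < 1` and continuous `u`:  `∫₀ᵗ u(s) D₀ₛ^{-δ} u(s) ds ≥ 0`. -/
theorem stmt_3 (T δ : ℝ) (hT : 0 < T) (hδ0 : 0 < δ) (hδ1 : δ < 1)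
    (u : ℝ → ℝ) (hu : ContinuousOn u (Icc 0 T))
    (t : ℝ) (ht : t ∈ Icc (0:ℝ) T) :
    0 ≤ ∫ s in (0:ℝ)..t, u s * ∫ η in (0:ℝ)..s, om δ (s - η) * u η := by
  -- A bounded continuous extension of `u` to the whole line.
  set w : ℝ → ℝ := IccExtend hT.le ((Icc 0 T).domRestrict u) with hw
  have hwc : Continuous w := (continuousOn_iff_continuous_domRestrict.1 hu).Icc_extend'
  have hwu : ∀ s ∈ Icc 0 T, w s = u s := fun s hs => by
    rw [hw, IccExtend_of_mem _ _ hs]; rfl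
  obtain ⟨M, hM⟩ := isCompact_Icc.exists_bound_of_continuousOn hu
  have hwM : ∀ η, |w η| ≤ M := fun η => hM _ (projIcc 0 T hT.le η).2
  have hG := Real.Gamma_pos_of_pos hδ0
  have h := integral_kernel_nonneg hwc hwM hδ0 hδ1 ht.1
  have heq : ∫ s in (0:ℝ)..t, u s * ∫ η in (0:ℝ)..s, om δ (s - η) * u η
      = (Real.Gamma δ)⁻¹ * ∫ s in (0:ℝ)..t, w s * ∫ η in (0:ℝ)..s, (s - η) ^ (δ - 1) * w η := by
    rw [← intervalIntegral.integral_const_mul]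
    refine intervalIntegral.integral_congr fun s hs => ?_
    rw [uIcc_of_le ht.1] at hs
    have hin : ∫ η in (0:ℝ)..s, om δ (s - η) * u η
        = (Real.Gamma δ)⁻¹ * ∫ η in (0:ℝ)..s, (s - η) ^ (δ - 1) * w η := by
      rw [← intervalIntegral.integral_const_mul]
      refine intervalIntegral.integral_congr fun η hη => ?_
      rw [uIcc_of_le hs.1] at hη
      simp only [om]
      rw [hwu η ⟨hη.1, hη.2.trans (hs.2.trans ht.2)⟩]
      ring
    rw [hin, hwu s ⟨hs.1, hs.2.trans ht.2⟩]
    ring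
  rw [heq]
  positivity
end

section
/- Let 0 < ν < 1 and define c_r^{(ν)} = (r+1)^{ν+1} − 2r^{ν+1} + (r−1)^{ν+1} for integers r ≥ 1. Then for every integer r ≥ 1: c_r^{(ν)} > 0, c_r^{(ν)} ≥ c_{r+1}^{(ν)}, and c_r^{(ν)} − 2 c_{r+1}^{(ν)} + c_{r+2}^{(ν)} ≥ 0; that is, the sequence (c_r^{(ν)})_{r ≥ 1} is positive, nonincreasing and convex. -/
/-!
With `f x = x ^ (ν + 1)` and the second difference `C x = f (x + 2) - 2 f (x + 1) + f x`, the weight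
`c_{r+1}` equals `C r` for every natural number `r`. Since differencing commutes with
differentiation, the signs of `C`, `C'` and `C''` are those of the second differences of
`x ^ (ν + 1)`, `x ^ ν` and `x ^ (ν - 1)`. These functions are strictly convex, concave and convex
respectively, so on `[0, ∞)` the function `C` is positive, nonincreasing and convex.
-/

/-- The weights `c_r^{(ν)}`: `c₀ = 1`, `c_r = (r+1)^{ν+1} − 2r^{ν+1} + (r−1)^{ν+1}` for `r ≥ 1`. -/
noncomputable def cw (ν : ℝ) (r : ℕ) : ℝ :=
  if r = 0 then 1
  else ((r:ℝ) + 1) ^ (ν + 1) - 2 * (r:ℝ) ^ (ν + 1) + ((r:ℝ) - 1) ^ (ν + 1)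

/-- The second forward difference of `x ↦ x ^ p`, with step `1`. -/
noncomputable def secondDiffRpow (p x : ℝ) : ℝ :=
  (x + 2) ^ p - 2 * (x + 1) ^ p + x ^ p

lemma cw_succ (ν : ℝ) (n : ℕ) : cw ν (n + 1) = secondDiffRpow (ν + 1) n := by
  unfold cw secondDiffRpow
  rw [if_neg (Nat.succ_ne_zero n)]
  push_cast
  rw [show (n : ℝ) + 1 + 1 = n + 2 by ring, show (n : ℝ) + 1 - 1 = n by ring]

lemma secondDiffRpow_pos {p x : ℝ} (hp : 1 < p) (hx : 0 ≤ x) : 0 < secondDiffRpow p x := by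
  have h := (strictConvexOn_rpow hp).2 (show (0 : ℝ) ≤ x from hx)
    (show (0 : ℝ) ≤ x + 2 by linarith) (show x ≠ x + 2 by linarith)
    (show (0 : ℝ) < 1 / 2 by norm_num) (show (0 : ℝ) < 1 / 2 by norm_num) (by norm_num)
  simp only [smul_eq_mul] at h
  rw [show 1 / 2 * x + 1 / 2 * (x + 2) = x + 1 by ring] at h
  unfold secondDiffRpow
  linarith

lemma secondDiffRpow_nonpos {p x : ℝ} (hp₀ : 0 ≤ p) (hp₁ : p ≤ 1) (hx : 0 ≤ x) :
    secondDiffRpow p x ≤ 0 := by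
  have h := (Real.concaveOn_rpow hp₀ hp₁).2 (show (0 : ℝ) ≤ x from hx)
    (show (0 : ℝ) ≤ x + 2 by linarith)
    (show (0 : ℝ) ≤ 1 / 2 by norm_num) (show (0 : ℝ) ≤ 1 / 2 by norm_num) (by norm_num)
  simp only [smul_eq_mul] at h
  rw [show 1 / 2 * x + 1 / 2 * (x + 2) = x + 1 by ring] at h
  unfold secondDiffRpow
  linarith

/-- Bernoulli's inequality for nonpositive exponents, from `u ^ s = exp (s log u) ≥ 1 + s log u`
and `log u ≤ u - 1`. -/
lemma one_add_mul_sub_one_le_rpow {s u : ℝ} (hs : s ≤ 0) (hu : 0 < u) :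
    1 + s * (u - 1) ≤ u ^ s := by
  rw [Real.rpow_def_of_pos hu]
  have h1 := Real.add_one_le_exp (Real.log u * s)
  nlinarith [Real.log_le_sub_one_of_pos hu]

/-- The graph of `y ↦ y ^ s` lies above its tangent at `m = x + 1`; the linear terms of the
tangent at `m - 1` and `m + 1` cancel. -/
lemma secondDiffRpow_nonneg_of_nonpos {s x : ℝ} (hs : s ≤ 0) (hx : 0 < x) :
    0 ≤ secondDiffRpow s x := by
  have hm : 0 < x + 1 := by linarith
  have key : ∀ y : ℝ, 0 < y →
      (x + 1) ^ s * (1 + s * (y / (x + 1) - 1)) ≤ y ^ s := fun y hy => by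
    have h := mul_le_mul_of_nonneg_left
      (one_add_mul_sub_one_le_rpow hs (div_pos hy hm)) (Real.rpow_nonneg hm.le s)
    rwa [← Real.mul_rpow hm.le (div_pos hy hm).le, mul_div_cancel₀ _ hm.ne'] at h
  have h1 := key x hx
  have h2 := key (x + 2) (by linarith)
  have h3 : (x + 1) ^ s * (1 + s * (x / (x + 1) - 1)) +
      (x + 1) ^ s * (1 + s * ((x + 2) / (x + 1) - 1)) = 2 * (x + 1) ^ s := by
    field_simp
    ring
  unfold secondDiffRpow
  linarith

lemma hasDerivAt_secondDiffRpow (p : ℝ) {x : ℝ} (hx : 0 < x) :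
    HasDerivAt (secondDiffRpow p) (p * secondDiffRpow (p - 1) x) x := by
  have h (a : ℝ) (ha : 0 ≤ a) :
      HasDerivAt (fun y : ℝ => (y + a) ^ p) (1 * p * (x + a) ^ (p - 1)) x :=
    ((hasDerivAt_id x).add_const a).rpow_const (Or.inl (by simp only [id]; linarith))
  have h0 := h 0 le_rfl
  simp only [add_zero] at h0
  have h' := ((h 2 (by norm_num)).sub ((h 1 (by norm_num)).const_mul 2)).add h0
  refine HasDerivAt.congr_deriv h' ?_
  unfold secondDiffRpow
  ring

lemma continuous_secondDiffRpow {p : ℝ} (hp : 0 ≤ p) : Continuous (secondDiffRpow p) := by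
  unfold secondDiffRpow
  have h := Real.continuous_rpow_const hp
  exact ((h.comp (continuous_add_const 2)).sub
    (continuous_const.mul (h.comp (continuous_add_const 1)))).add h

lemma antitoneOn_secondDiffRpow {p : ℝ} (hp₁ : 1 ≤ p) (hp₂ : p ≤ 2) :
    AntitoneOn (secondDiffRpow p) (Set.Ici 0) := by
  refine antitoneOn_of_hasDerivWithinAt_nonpos (convex_Ici 0)
    (f' := fun x => p * secondDiffRpow (p - 1) x)
    (continuous_secondDiffRpow (by linarith)).continuousOn ?_ ?_ <;>
  · intro x hx
    rw [interior_Ici, Set.mem_Ioi] at hx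
    first
    | exact (hasDerivAt_secondDiffRpow p hx).hasDerivWithinAt
    | exact mul_nonpos_of_nonneg_of_nonpos (by linarith)
        (secondDiffRpow_nonpos (by linarith) (by linarith) hx.le)

lemma convexOn_secondDiffRpow {p : ℝ} (hp₁ : 1 ≤ p) (hp₂ : p ≤ 2) :
    ConvexOn ℝ (Set.Ici 0) (secondDiffRpow p) := by
  refine convexOn_of_hasDerivWithinAt2_nonneg (convex_Ici 0)
    (f' := fun x => p * secondDiffRpow (p - 1) x)
    (f'' := fun x => p * ((p - 1) * secondDiffRpow (p - 1 - 1) x))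
    (continuous_secondDiffRpow (by linarith)).continuousOn ?_ ?_ ?_ <;>
  · intro x hx
    rw [interior_Ici, Set.mem_Ioi] at hx
    first
    | exact (hasDerivAt_secondDiffRpow p hx).hasDerivWithinAt
    | exact ((hasDerivAt_secondDiffRpow (p - 1) hx).const_mul p).hasDerivWithinAt
    | exact mul_nonneg (by linarith) (mul_nonneg (by linarith)
        (secondDiffRpow_nonneg_of_nonpos (by linarith) hx))

/-- The interior trapezoidal weights are positive, nonincreasing and convex. -/
theorem stmt_9 (ν : ℝ) (hν0 : 0 < ν) (hν1 : ν < 1) (r : ℕ) (hr : 1 ≤ r) :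
    0 < cw ν r ∧ cw ν (r + 1) ≤ cw ν r ∧ 0 ≤ cw ν r - 2 * cw ν (r + 1) + cw ν (r + 2) := by
  obtain ⟨n, rfl⟩ : ∃ n, r = n + 1 := ⟨r - 1, by omega⟩
  have hn : (0 : ℝ) ≤ n := n.cast_nonneg
  rw [show n + 1 + 2 = (n + 2) + 1 by ring, cw_succ, cw_succ, cw_succ]
  push_cast
  have h1 : (0 : ℝ) ≤ n + 1 := by linarith
  have h2 : (0 : ℝ) ≤ n + 2 := by linarith
  refine ⟨secondDiffRpow_pos (by linarith) hn,
    antitoneOn_secondDiffRpow (by linarith) (by linarith) hn h1 (by linarith), ?_⟩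
  have h := (convexOn_secondDiffRpow (p := ν + 1) (by linarith) (by linarith)).2 hn h2
    (show (0 : ℝ) ≤ 1 / 2 by norm_num) (show (0 : ℝ) ≤ 1 / 2 by norm_num) (by norm_num)
  simp only [smul_eq_mul] at h
  rw [show 1 / 2 * (n : ℝ) + 1 / 2 * (n + 2) = n + 1 by ring] at h
  linarith
end

section
/- Let κ₀, κ₁ be real numbers with κ₀ ≥ max{κ₁, −3κ₁} (so κ₀ − κ₁ ≥ 0 and κ₀ + 3κ₁ ≥ 0), and let v₀, v₁, …, v_N be real numbers. For j ≥ 1 define E_j(κ₀, κ₁) = ( (1/2)√((κ₀ − κ₁)/2) + (1/2)√((κ₀ + 3κ₁)/2) )² v_j² + ( √((κ₀ − κ₁)/2) v_j − ( (1/2)√((κ₀ − κ₁)/2) + (1/2)√((κ₀ + 3κ₁)/2) ) v_{j−1} )². Then for every j with 1 ≤ j ≤ N − 1: v_{j+1} ( κ₀ v_{j+1} − (κ₀ − κ₁) v_j − κ₁ v_{j−1} ) ≥ E_{j+1}(κ₀, κ₁) − E_j(κ₀, κ₁). -/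
/-- Energy inequality for a three-term recurrence (Alikhanov's lemma). -/
theorem stmt_10 (κ₀ κ₁ : ℝ) (hκ : max κ₁ (-3 * κ₁) ≤ κ₀)
    (N : ℕ) (v : ℕ → ℝ) (E : ℕ → ℝ)
    (hE : ∀ j, 1 ≤ j →
      E j = ((1/2) * Real.sqrt ((κ₀ - κ₁)/2) + (1/2) * Real.sqrt ((κ₀ + 3*κ₁)/2))^2 * (v j)^2
        + (Real.sqrt ((κ₀ - κ₁)/2) * v j
            - ((1/2) * Real.sqrt ((κ₀ - κ₁)/2) + (1/2) * Real.sqrt ((κ₀ + 3*κ₁)/2)) * v (j-1))^2)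
    (j : ℕ) (hj1 : 1 ≤ j) (hj2 : j ≤ N - 1) :
    E (j+1) - E j ≤ v (j+1) * (κ₀ * v (j+1) - (κ₀ - κ₁) * v j - κ₁ * v (j-1)) := by
  have h1 : 0 ≤ (κ₀ - κ₁) / 2 := by linarith [le_trans (le_max_left _ _) hκ]
  have h2 : 0 ≤ (κ₀ + 3 * κ₁) / 2 := by linarith [le_trans (le_max_right _ _) hκ]
  have ha := Real.sq_sqrt h1
  have hb := Real.sq_sqrt h2
  rw [hE (j + 1) (by omega), hE j hj1, Nat.add_sub_cancel]
  generalize Real.sqrt ((κ₀ - κ₁) / 2) = a at *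
  generalize Real.sqrt ((κ₀ + 3 * κ₁) / 2) = b at *
  obtain rfl : κ₁ = (b ^ 2 - a ^ 2) / 2 := by linarith
  obtain rfl : κ₀ = (3 * a ^ 2 + b ^ 2) / 2 := by linarith
  -- The right side minus the left side is exactly this square.
  linarith [sq_nonneg ((b - a) / 2 * v (j + 1) + a * v j - (a + b) / 2 * v (j - 1))]
end

section
/- Let H be a real inner product space and let e⁰, e¹, …, e^N be elements of H. Define E_s = (1/4)‖e^s‖² + ‖e^s − (1/2)e^{s−1}‖² for s ≥ 1. Then for every s with 1 ≤ s ≤ N − 1: ⟨ e^{s+1}, (3e^{s+1} − 4e^s + e^{s−1})/2 ⟩ ≥ E_{s+1} − E_s. -/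
open scoped RealInnerProductSpace

/-- G-stability (energy) inequality for the BDF2 operator in a real inner product space. -/
theorem stmt_15 {H : Type*} [NormedAddCommGroup H] [InnerProductSpace ℝ H]
    (N : ℕ) (e : ℕ → H) (E : ℕ → ℝ)
    (hE : ∀ s, 1 ≤ s → E s = (1/4) * ‖e s‖^2 + ‖e s - (1/2 : ℝ) • e (s-1)‖^2)
    (s : ℕ) (hs1 : 1 ≤ s) (hs2 : s ≤ N - 1) :
    E (s+1) - E s ≤ ⟪e (s+1), (1/2 : ℝ) • ((3:ℝ) • e (s+1) - (4:ℝ) • e s + e (s-1))⟫ := by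
  have h1 := hE s hs1
  have h2 := hE (s + 1) (by lia)
  rw [Nat.add_sub_cancel] at h2
  rw [h1, h2]
  -- The gap between the two sides is exactly the squared norm of half the second difference.
  have key : 0 ≤ ‖(1/2 : ℝ) • e (s+1) - e s + (1/2 : ℝ) • e (s-1)‖^2 := sq_nonneg _
  simp only [← real_inner_self_eq_norm_sq, inner_add_left, inner_add_right, inner_sub_left,
    inner_sub_right, real_inner_smul_left, real_inner_smul_right] at key ⊢
  have c1 := real_inner_comm (e (s+1)) (e s)
  have c2 := real_inner_comm (e (s+1)) (e (s-1))
  have c3 := real_inner_comm (e s) (e (s-1))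
  linarith
end
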